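/- Comparison of the rate functionals with and without interaction: for every β ≥ 0 and every π : [0,T] × [-1,1] → [0,1] which is continuous and continuously differentiable in the space variable u with ∂_u π continuous on [0,T] × [-1,1], (1/2) Î^0(π) - (β²/16) ∫_0^T ∫_{-1}^{1} (∂_u π)² du dt ≤ Î^β(π) ≤ 2 Î^0(π) + (β²/8) ∫_0^T ∫_{-1}^{1} (∂_u π)² du dt. -/

import Mathlib

open MeasureTheory Set
open scoped ENNReal

noncomputable section

/-- The Neumann (reflected) Kac kernel. -/
def Jneum (j : ℝ → ℝ) (u v : ℝ) : ℝ := j (v - u) + j (2 - v - u) + j (-2 - v - u)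

/-- Convolution with the Neumann kernel: `(J^neum ⋆ m)(u) = ∫_{-1}^1 J^neum(u,v) m(v) dv`. -/
def convJ (j m : ℝ → ℝ) (u : ℝ) : ℝ := ∫ v in (-1:ℝ)..1, Jneum j u v * m v

/-- Mobility `σ(ρ) = 2ρ(1-ρ)`. -/
def sigmaMob (ρ : ℝ) : ℝ := 2 * ρ * (1 - ρ)

/-- Test functions for the rate functional: `C¹` in time, `C²` in space (with jointly
continuous derivatives), vanishing at the spatial boundary `±1`. -/
def RateTest (G : ℝ → ℝ → ℝ) : Prop :=
  Continuous (Function.uncurry G) ∧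
  (∀ u : ℝ, ContDiff ℝ 1 (fun t => G t u)) ∧
  (∀ t : ℝ, ContDiff ℝ 2 (fun u => G t u)) ∧
  Continuous (Function.uncurry fun t u => deriv (fun s => G s u) t) ∧
  Continuous (Function.uncurry fun t u => deriv (fun w => G t w) u) ∧
  Continuous (Function.uncurry fun t u => deriv (deriv (fun w => G t w)) u) ∧
  (∀ t : ℝ, G t (-1) = 0 ∧ G t 1 = 0)

/-- The linear part `ℓ_G^β(π)` of the rate functional. -/
def ellG (j : ℝ → ℝ) (β ρm ρp T : ℝ) (π G : ℝ → ℝ → ℝ) : ℝ :=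
  (∫ u in (-1:ℝ)..1, π T u * G T u) - (∫ u in (-1:ℝ)..1, π 0 u * G 0 u)
  - (∫ t in (0:ℝ)..T, ∫ u in (-1:ℝ)..1, π t u * deriv (fun s => G s u) t)
  - (∫ t in (0:ℝ)..T, ∫ u in (-1:ℝ)..1, π t u * deriv (deriv (fun w => G t w)) u)
  + ρp * (∫ t in (0:ℝ)..T, deriv (fun w => G t w) 1)
  - ρm * (∫ t in (0:ℝ)..T, deriv (fun w => G t w) (-1))
  - (β/2) * ∫ t in (0:ℝ)..T, ∫ u in (-1:ℝ)..1,
      sigmaMob (π t u) * (deriv (fun w => G t w) u * deriv (convJ j (fun v => π t v)) u)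

/-- The functional `𝒥_G^β(π) = ℓ_G^β(π) - (1/2) ∫∫ σ(π) (∂_u G)²`. -/
def JG (j : ℝ → ℝ) (β ρm ρp T : ℝ) (π G : ℝ → ℝ → ℝ) : ℝ :=
  ellG j β ρm ρp T π G -
    (1/2) * ∫ t in (0:ℝ)..T, ∫ u in (-1:ℝ)..1,
      sigmaMob (π t u) * (deriv (fun w => G t w) u)^2

/-- The rate functional `Î^β(π) = sup_G 𝒥_G^β(π)`, valued in `[0,+∞]`. -/
def Ihat (j : ℝ → ℝ) (β ρm ρp T : ℝ) (π : ℝ → ℝ → ℝ) : ℝ≥0∞ :=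
  ⨆ (G : ℝ → ℝ → ℝ) (_ : RateTest G), ENNReal.ofReal (JG j β ρm ρp T π G)

/-!
Only the interaction term of `𝒥_G^β(π)` depends on `β`. Testing with `G / 2` frees a quarter of
`∫∫ σ(π) (∂_u G)²`, which by Young's inequality and `σ ≤ 1/2` absorbs that term at the cost of
`∫∫ (∂_u (J^neum ⋆ π))²`. Integrating by parts, `∂_u (J^neum ⋆ m) = J^dir ⋆ ∂_u m`, where `J^dir`
has odd reflections in place of even ones; since `|J^dir|` is dominated by a symmetric kernel with
mass at most one, Schur's test bounds the cost by `∫∫ (∂_u π)²`. The resulting estimate compares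
any two values of `β`, so exchanging them yields the lower bound from the upper one.
-/

section IntervalIntegral

theorem hasDerivAt_intervalIntegral_of_continuous {E : Type*} [NormedAddCommGroup E]
    [NormedSpace ℝ E] {F F' : ℝ → ℝ → E} (hF : ∀ x, Continuous (F x))
    (hF' : Continuous (Function.uncurry F'))
    (hderiv : ∀ x v, HasDerivAt (fun y => F y v) (F' x v) x) (a b x : ℝ) :
    HasDerivAt (fun y => ∫ v in a..b, F y v) (∫ v in a..b, F' x v) x := by
  obtain ⟨C, hC⟩ := ((isCompact_Icc (a := x - 1) (b := x + 1)).prod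
    (isCompact_uIcc (a := a) (b := b))).exists_bound_of_continuousOn hF'.continuousOn
  refine (intervalIntegral.hasDerivAt_integral_of_dominated_loc_of_deriv_le
    (s := Icc (x - 1) (x + 1)) (bound := fun _ => C)
    (Icc_mem_nhds (by linarith) (by linarith)) ?_ ?_ ?_ ?_ ?_ ?_).2
  · exact .of_forall fun y => (hF y).aestronglyMeasurable
  · exact (hF x).intervalIntegrable _ _
  · exact (hF'.uncurry_left x).aestronglyMeasurable
  · exact .of_forall fun v hv y hy => hC (y, v) ⟨hy, uIoc_subset_uIcc hv⟩
  · exact intervalIntegrable_const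
  · exact .of_forall fun v _ y _ => hderiv y v

theorem intervalIntegrable_intervalIntegral_of_continuous {E : Type*} [NormedAddCommGroup E]
    [NormedSpace ℝ E] {F : ℝ → ℝ → E} (hF : Continuous (Function.uncurry F)) (a b c d : ℝ) :
    IntervalIntegrable (fun t => ∫ u in c..d, F t u) volume a b :=
  (intervalIntegral.continuous_parametric_intervalIntegral_of_continuous' hF c
    d).intervalIntegrable a b

theorem integral_integral_sub_of_continuous {E : Type*} [NormedAddCommGroup E]
    [NormedSpace ℝ E] {F H : ℝ → ℝ → E}
    (hF : Continuous (Function.uncurry F)) (hH : Continuous (Function.uncurry H)) (a b c d : ℝ) :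
    ∫ t in a..b, ∫ u in c..d, (F t u - H t u) =
      (∫ t in a..b, ∫ u in c..d, F t u) - ∫ t in a..b, ∫ u in c..d, H t u := by
  have inner_sub (t : ℝ) : ∫ u in c..d, (F t u - H t u) =
      (∫ u in c..d, F t u) - ∫ u in c..d, H t u :=
    intervalIntegral.integral_sub ((hF.uncurry_left t).intervalIntegrable _ _)
      ((hH.uncurry_left t).intervalIntegrable _ _)
  simp only [inner_sub]
  exact intervalIntegral.integral_sub
    (intervalIntegrable_intervalIntegral_of_continuous hF _ _ _ _)
    (intervalIntegrable_intervalIntegral_of_continuous hH _ _ _ _)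

theorem integral_integral_mono_on_of_continuous {F H : ℝ → ℝ → ℝ} {a b c d : ℝ}
    (hab : a ≤ b) (hcd : c ≤ d)
    (hF : Continuous (Function.uncurry F)) (hH : Continuous (Function.uncurry H))
    (hle : ∀ t ∈ Icc a b, ∀ u ∈ Icc c d, F t u ≤ H t u) :
    ∫ t in a..b, ∫ u in c..d, F t u ≤ ∫ t in a..b, ∫ u in c..d, H t u :=
  intervalIntegral.integral_mono_on hab
    (intervalIntegrable_intervalIntegral_of_continuous hF _ _ _ _)
    (intervalIntegrable_intervalIntegral_of_continuous hH _ _ _ _)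
    fun t ht => intervalIntegral.integral_mono_on hcd
      ((hF.uncurry_left t).intervalIntegrable _ _) ((hH.uncurry_left t).intervalIntegrable _ _)
      (hle t ht)

end IntervalIntegral

section SchurTest

open intervalIntegral (continuous_parametric_intervalIntegral_of_continuous')

theorem sq_integral_mul_le_integral_mul_sq {α : Type*} [MeasurableSpace α] {μ : Measure α}
    {k w f : α → ℝ} (hkw : ∀ x, |k x| ≤ w x) (hw : Integrable w μ)
    (hkf : Integrable (fun x => k x * f x) μ) (hwf : Integrable (fun x => w x * f x ^ 2) μ)
    (hmass : ∫ x, w x ∂μ ≤ 1) :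
    (∫ x, k x * f x ∂μ) ^ 2 ≤ ∫ x, w x * f x ^ 2 ∂μ := by
  set D := ∫ x, k x * f x ∂μ
  have integrand_nonneg (x : α) :
      0 ≤ w x * f x ^ 2 - 2 * D * (k x * f x) + D ^ 2 * w x := by
    obtain ⟨hneg, hpos⟩ := abs_le.1 (hkw x)
    nlinarith [mul_nonneg (sub_nonneg.2 hpos) (sq_nonneg (f x + D)),
      mul_nonneg (neg_le_iff_add_nonneg.1 hneg) (sq_nonneg (f x - D))]
  have integral_expand :
      ∫ x, (w x * f x ^ 2 - 2 * D * (k x * f x) + D ^ 2 * w x) ∂μ =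
        ∫ x, w x * f x ^ 2 ∂μ - 2 * D * D + D ^ 2 * ∫ x, w x ∂μ := by
    rw [integral_add (.sub' hwf (hkf.const_mul _)) (hw.const_mul _),
      integral_sub hwf (hkf.const_mul _), integral_const_mul, integral_const_mul]
  have expand_nonneg := integral_expand ▸ integral_nonneg integrand_nonneg
  nlinarith [mul_le_mul_of_nonneg_left hmass (sq_nonneg D)]

theorem sq_intervalIntegral_mul_le_of_continuous {k w f : ℝ → ℝ} {a b : ℝ} (hab : a ≤ b)
    (hk : Continuous k) (hw : Continuous w) (hf : Continuous f) (hkw : ∀ x, |k x| ≤ w x)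
    (hmass : ∫ x in a..b, w x ≤ 1) :
    (∫ x in a..b, k x * f x) ^ 2 ≤ ∫ x in a..b, w x * f x ^ 2 := by
  simp only [intervalIntegral.integral_of_le hab] at hmass ⊢
  exact sq_integral_mul_le_integral_mul_sq hkw (hw.intervalIntegrable a b).1
    ((hk.mul hf).intervalIntegrable a b).1 ((hw.mul (hf.pow 2)).intervalIntegrable a b).1 hmass

theorem integral_sq_integral_mul_le_of_abs_le {K W : ℝ → ℝ → ℝ} {f : ℝ → ℝ} {a b c d : ℝ}
    (hab : a ≤ b) (hcd : c ≤ d)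
    (hK : Continuous (Function.uncurry K)) (hW : Continuous (Function.uncurry W))
    (hf : Continuous f) (hKW : ∀ u v, |K u v| ≤ W u v)
    (hrow : ∀ u ∈ Icc a b, ∫ v in c..d, W u v ≤ 1)
    (hcol : ∀ v ∈ Icc c d, ∫ u in a..b, W u v ≤ 1) :
    ∫ u in a..b, (∫ v in c..d, K u v * f v) ^ 2 ≤ ∫ v in c..d, f v ^ 2 := by
  have hf_snd : Continuous fun p : ℝ × ℝ => f p.2 := hf.comp continuous_snd
  have hKf : Continuous (Function.uncurry fun u v => K u v * f v) := hK.mul hf_snd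
  have hWf : Continuous (Function.uncurry fun u v => W u v * f v ^ 2) := hW.mul (hf_snd.pow 2)
  have hWf_integrable : IntegrableOn (Function.uncurry fun u v => W u v * f v ^ 2)
      (uIoc a b ×ˢ uIoc c d) :=
    (hWf.continuousOn.integrableOn_compact (isCompact_uIcc.prod isCompact_uIcc)).mono_set
      (prod_mono uIoc_subset_uIcc uIoc_subset_uIcc)
  calc ∫ u in a..b, (∫ v in c..d, K u v * f v) ^ 2
      ≤ ∫ u in a..b, ∫ v in c..d, W u v * f v ^ 2 :=
        intervalIntegral.integral_mono_on hab
          ((continuous_parametric_intervalIntegral_of_continuous' hKf c d).pow 2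
            |>.intervalIntegrable _ _)
          (intervalIntegrable_intervalIntegral_of_continuous hWf _ _ _ _)
          fun u hu => sq_intervalIntegral_mul_le_of_continuous hcd (hK.uncurry_left u)
            (hW.uncurry_left u) hf (hKW u) (hrow u hu)
    _ = ∫ v in c..d, (∫ u in a..b, W u v) * f v ^ 2 := by
        rw [intervalIntegral_intervalIntegral_swap hWf_integrable]
        simp only [intervalIntegral.integral_mul_const]
    _ ≤ ∫ v in c..d, f v ^ 2 := by
        have hcol_cont : Continuous fun v => ∫ u in a..b, W u v :=
          continuous_parametric_intervalIntegral_of_continuous' (f := fun v u => W u v)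
            (hW.comp continuous_swap) a b
        refine intervalIntegral.integral_mono_on hcd
          ((hcol_cont.mul (hf.pow 2)).intervalIntegrable _ _)
          ((hf.pow 2).intervalIntegrable _ _) fun v hv => ?_
        exact mul_le_of_le_one_left (sq_nonneg _) (hcol v hv)

end SchurTest

section NeumannKernel

variable {j m : ℝ → ℝ} {u : ℝ}

/-- The Dirichlet kernel: `j` with odd, rather than even, reflections at `±1`. It is the kernel
carrying `∂_u m` to `∂_u (J^neum ⋆ m)`. -/
def Jdir (j : ℝ → ℝ) (u v : ℝ) : ℝ := j (v - u) - j (2 - v - u) - j (-2 - v - u)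

theorem continuous_uncurry_Jneum (hj : Continuous j) : Continuous (Function.uncurry (Jneum j)) := by
  unfold Jneum Function.uncurry
  fun_prop

theorem continuous_uncurry_Jdir (hj : Continuous j) : Continuous (Function.uncurry (Jdir j)) := by
  unfold Jdir Function.uncurry
  fun_prop

theorem Jneum_comm (hj : j.Even) (u v : ℝ) : Jneum j u v = Jneum j v u := by
  unfold Jneum
  rw [← hj (v - u), neg_sub, sub_right_comm 2 v u, sub_right_comm (-2) v u]

theorem abs_Jdir_le (j : ℝ → ℝ) (u v : ℝ) : |Jdir j u v| ≤ Jneum (fun x => |j x|) u v :=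
  (abs_sub _ _).trans (add_le_add_left (abs_sub _ _) _)

theorem integral_Jneum (hj : Continuous j) (hsupp : ∀ x, 1 < |x| → j x = 0)
    (hu : u ∈ Icc (-1 : ℝ) 1) : ∫ v in (-1 : ℝ)..1, Jneum j u v = ∫ x, j x := by
  have hint (a b : ℝ) : IntervalIntegrable j volume a b := hj.intervalIntegrable a b
  have support_subset : Function.support j ⊆ Ioc (-3 - u) (3 - u) := by
    intro x hx
    obtain ⟨hx_lower, hx_upper⟩ := abs_le.1 (not_lt.1 (mt (hsupp x) hx))
    constructor <;> linarith [hu.1, hu.2]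
  calc ∫ v in (-1 : ℝ)..1, Jneum j u v
      = (∫ v in (-1 : ℝ)..1, j (v - u)) + (∫ v in (-1 : ℝ)..1, j (2 - u - v))
          + ∫ v in (-1 : ℝ)..1, j (-2 - u - v) := by
        rw [← intervalIntegral.integral_add, ← intervalIntegral.integral_add]
        · simp only [Jneum, sub_right_comm _ u]
        all_goals exact Continuous.intervalIntegrable (by fun_prop) _ _
    _ = (∫ x in (-1 - u)..(1 - u), j x) + (∫ x in (1 - u)..(3 - u), j x)
          + ∫ x in (-3 - u)..(-1 - u), j x := by
        rw [intervalIntegral.integral_comp_sub_right j, intervalIntegral.integral_comp_sub_left j,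
          intervalIntegral.integral_comp_sub_left j]
        ring_nf
    _ = ∫ x in (-3 - u)..(3 - u), j x := by
        rw [intervalIntegral.integral_add_adjacent_intervals (hint _ _) (hint _ _), add_comm,
          intervalIntegral.integral_add_adjacent_intervals (hint _ _) (hint _ _)]
    _ = ∫ x, j x := intervalIntegral.integral_eq_integral_of_support_subset support_subset

theorem hasDerivAt_Jneum_left (hj : Differentiable ℝ j) (u v : ℝ) :
    HasDerivAt (fun x => Jneum j x v) (-Jneum (deriv j) u v) u := by
  have hj' (a : ℝ) : HasDerivAt (fun x => j (a - x)) (-deriv j (a - u)) u :=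
    (hj _).hasDerivAt.comp_const_sub a u
  refine (((hj' v).add (hj' (2 - v))).add (hj' (-2 - v))).congr_deriv ?_
  unfold Jneum
  ring

theorem hasDerivAt_Jdir_right (hj : Differentiable ℝ j) (u v : ℝ) :
    HasDerivAt (Jdir j u) (Jneum (deriv j) u v) v := by
  have hj' (a : ℝ) : HasDerivAt (fun x => j (a - x - u)) (-deriv j (a - v - u)) v := by
    simpa only [sub_right_comm a] using (hj _).hasDerivAt.comp_const_sub (a - u) v
  refine ((((hj _).hasDerivAt.comp_sub_const v u).sub (hj' 2)).sub (hj' (-2))).congr_deriv ?_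
  unfold Jneum
  ring

theorem Jdir_one_right (hsupp : ∀ x, 1 < |x| → j x = 0) (hu : -2 < u) : Jdir j u 1 = 0 := by
  have : j (-2 - 1 - u) = 0 := hsupp _ (by rw [abs_of_neg] <;> linarith)
  rw [Jdir, this]
  norm_num

theorem Jdir_neg_one_right (hsupp : ∀ x, 1 < |x| → j x = 0) (hu : u < 2) : Jdir j u (-1) = 0 := by
  have : j (2 - -1 - u) = 0 := hsupp _ (by rw [abs_of_pos] <;> linarith)
  rw [Jdir, this]
  norm_num

theorem deriv_convJ (hj : ContDiff ℝ 1 j) (hm : Continuous m) (u : ℝ) :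
    deriv (convJ j m) u = -convJ (deriv j) m u := by
  have hm_snd : Continuous fun p : ℝ × ℝ => m p.2 := hm.comp continuous_snd
  have hderiv : HasDerivAt (convJ j m) _ u := hasDerivAt_intervalIntegral_of_continuous
    (F := fun u v => Jneum j u v * m v) (F' := fun u v => -Jneum (deriv j) u v * m v)
    (fun x => ((continuous_uncurry_Jneum hj.continuous).uncurry_left x).mul hm)
    ((continuous_uncurry_Jneum (hj.continuous_deriv le_rfl)).neg.mul hm_snd)
    (fun x v => (hasDerivAt_Jneum_left (hj.differentiable one_ne_zero) x v).mul_const (m v))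
    (-1) 1 u
  rw [hderiv.deriv]
  simp only [neg_mul, intervalIntegral.integral_neg, convJ]

theorem deriv_convJ_eq_integral_Jdir (hj : ContDiff ℝ 1 j) (hsupp : ∀ x, 1 < |x| → j x = 0)
    (hm : ContDiff ℝ 1 m) (hu : u ∈ Icc (-1 : ℝ) 1) :
    deriv (convJ j m) u = ∫ v in (-1 : ℝ)..1, Jdir j u v * deriv m v := by
  have by_parts := intervalIntegral.integral_mul_deriv_eq_deriv_mul (a := -1) (b := 1)
    (fun v _ => hasDerivAt_Jdir_right (hj.differentiable one_ne_zero) u v)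
    (fun v _ => (hm.differentiable one_ne_zero v).hasDerivAt)
    (((continuous_uncurry_Jneum (hj.continuous_deriv le_rfl)).uncurry_left
      u).intervalIntegrable _ _)
    ((hm.continuous_deriv le_rfl).intervalIntegrable _ _)
  rw [by_parts, Jdir_one_right hsupp (by linarith [hu.1]),
    Jdir_neg_one_right hsupp (by linarith [hu.2]), deriv_convJ hj hm.continuous, convJ]
  ring

theorem integral_sq_deriv_convJ_le (hj : ContDiff ℝ 1 j) (heven : j.Even)
    (hsupp : ∀ x, 1 < |x| → j x = 0) (hmass : ∫ x, |j x| ≤ 1) (hm : ContDiff ℝ 1 m) :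
    ∫ u in (-1 : ℝ)..1, deriv (convJ j m) u ^ 2 ≤ ∫ u in (-1 : ℝ)..1, deriv m u ^ 2 := by
  have row_mass (u : ℝ) (hu : u ∈ Icc (-1 : ℝ) 1) :
      ∫ v in (-1 : ℝ)..1, Jneum (fun x => |j x|) u v ≤ 1 := by
    rwa [integral_Jneum hj.continuous.abs (fun x hx => by rw [hsupp x hx, abs_zero]) hu]
  have col_mass (v : ℝ) (hv : v ∈ Icc (-1 : ℝ) 1) :
      ∫ u in (-1 : ℝ)..1, Jneum (fun x => |j x|) u v ≤ 1 := by
    have habs : Function.Even fun x => |j x| := heven.left_comp abs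
    simpa only [Jneum_comm habs _ v] using row_mass v hv
  calc ∫ u in (-1 : ℝ)..1, deriv (convJ j m) u ^ 2
      = ∫ u in (-1 : ℝ)..1, (∫ v in (-1 : ℝ)..1, Jdir j u v * deriv m v) ^ 2 := by
        refine intervalIntegral.integral_congr fun u hu => ?_
        rw [uIcc_of_le (by norm_num)] at hu
        exact congrArg (· ^ 2) (deriv_convJ_eq_integral_Jdir hj hsupp hm hu)
    _ ≤ ∫ u in (-1 : ℝ)..1, deriv m u ^ 2 :=
        integral_sq_integral_mul_le_of_abs_le (by norm_num) (by norm_num)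
          (continuous_uncurry_Jdir hj.continuous) (continuous_uncurry_Jneum hj.continuous.abs)
          (hm.continuous_deriv le_rfl) (abs_Jdir_le j) row_mass col_mass

theorem continuous_uncurry_convJ {π : ℝ → ℝ → ℝ} (hj : Continuous j)
    (hπ : Continuous (Function.uncurry π)) :
    Continuous (Function.uncurry fun t u => convJ j (π t) u) := by
  refine intervalIntegral.continuous_parametric_intervalIntegral_of_continuous'
    (f := fun (p : ℝ × ℝ) v => Jneum j p.2 v * π p.1 v) (.mul ?_ ?_) _ _
  · exact (continuous_uncurry_Jneum hj).comp
      (by fun_prop : Continuous fun q : (ℝ × ℝ) × ℝ => (q.1.2, q.2))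
  · exact hπ.comp (by fun_prop : Continuous fun q : (ℝ × ℝ) × ℝ => (q.1.1, q.2))

theorem continuous_uncurry_deriv_convJ {π : ℝ → ℝ → ℝ} (hj : ContDiff ℝ 1 j)
    (hπ : Continuous (Function.uncurry π)) :
    Continuous (Function.uncurry fun t u => deriv (convJ j (π t)) u) := by
  simp only [deriv_convJ hj (hπ.uncurry_left _)]
  exact (continuous_uncurry_convJ (hj.continuous_deriv le_rfl) hπ).neg

end NeumannKernel

section RateFunctional

variable {j : ℝ → ℝ} {T : ℝ} {π G : ℝ → ℝ → ℝ}

/-- The interaction term `∫∫ σ(π) ∂_u G ∂_u (J^neum ⋆ π)`, whose multiple by `-β/2` is the only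
dependence of `𝒥_G^β(π)` on `β`. -/
def interactionTerm (j : ℝ → ℝ) (T : ℝ) (π G : ℝ → ℝ → ℝ) : ℝ :=
  ∫ t in (0 : ℝ)..T, ∫ u in (-1 : ℝ)..1,
    sigmaMob (π t u) * (deriv (fun w => G t w) u * deriv (convJ j (fun v => π t v)) u)

/-- The quadratic form `∫∫ σ(π) (∂_u G)²` weighted by the mobility, twice the quadratic part of
`𝒥_G^β(π)`. -/
def mobilityEnergy (T : ℝ) (π G : ℝ → ℝ → ℝ) : ℝ :=
  ∫ t in (0 : ℝ)..T, ∫ u in (-1 : ℝ)..1, sigmaMob (π t u) * deriv (fun w => G t w) u ^ 2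

/-- The space-time Dirichlet energy `∫∫ (∂_u π)²`. -/
def dirichletEnergy (T : ℝ) (π : ℝ → ℝ → ℝ) : ℝ :=
  ∫ t in (0 : ℝ)..T, ∫ u in (-1 : ℝ)..1, deriv (fun w => π t w) u ^ 2

theorem sigmaMob_mem_Icc {ρ : ℝ} (hρ : ρ ∈ Icc (0 : ℝ) 1) :
    sigmaMob ρ ∈ Icc (0 : ℝ) (1 / 2) := by
  unfold sigmaMob
  constructor
  · nlinarith [mul_nonneg hρ.1 (sub_nonneg.2 hρ.2)]
  · nlinarith [sq_nonneg (2 * ρ - 1)]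

theorem mul_mul_sub_mul_sq_le {s : ℝ} (hs : s ∈ Icc (0 : ℝ) (1 / 2)) (c g d : ℝ) :
    c * (s * (g * d)) - s * g ^ 2 ≤ c ^ 2 / 8 * d ^ 2 := by
  nlinarith [mul_nonneg hs.1 (sq_nonneg (g - c * d / 2)),
    mul_nonneg (sub_nonneg.2 hs.2) (sq_nonneg (c * d))]

theorem RateTest.const_mul (hG : RateTest G) (a : ℝ) : RateTest fun t u => a * G t u := by
  obtain ⟨cont, smooth_time, smooth_space, cont_dt, cont_du, cont_duu, boundary⟩ := hG
  refine ⟨cont.const_mul a, fun u => contDiff_const.mul (smooth_time u),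
    fun t => contDiff_const.mul (smooth_space t), ?_, ?_, ?_, fun t => by simp [boundary t]⟩
  all_goals simp only [deriv_const_mul_field']
  · exact cont_dt.const_mul a
  · exact cont_du.const_mul a
  · exact cont_duu.const_mul a

theorem JG_const_mul (j : ℝ → ℝ) (β ρm ρp T a : ℝ) (π G : ℝ → ℝ → ℝ) :
    JG j β ρm ρp T π (fun t u => a * G t u) =
      a * ellG j 0 ρm ρp T π G - a * β / 2 * interactionTerm j T π G
        - a ^ 2 / 2 * mobilityEnergy T π G := by
  unfold JG ellG interactionTerm mobilityEnergy
  simp only [deriv_const_mul_field', mul_pow, mul_left_comm _ a, mul_assoc a,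
    mul_left_comm _ (a ^ 2), intervalIntegral.integral_const_mul]
  ring

theorem JG_eq_two_mul_JG_half_add (j : ℝ → ℝ) (β β' ρm ρp T : ℝ) (π G : ℝ → ℝ → ℝ) :
    JG j β ρm ρp T π G = 2 * JG j β' ρm ρp T π (fun t u => 1 / 2 * G t u)
      + ((β' - β) / 2 * interactionTerm j T π G - 1 / 4 * mobilityEnergy T π G) := by
  have hJG := JG_const_mul j β ρm ρp T 1 π G
  simp only [one_mul] at hJG
  rw [hJG, JG_const_mul]
  ring

theorem integral_integral_sq_deriv_convJ_le (hj : ContDiff ℝ 1 j) (heven : j.Even)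
    (hsupp : ∀ x, 1 < |x| → j x = 0) (hmass : ∫ x, |j x| ≤ 1) (hT : 0 ≤ T)
    (hπ : Continuous (Function.uncurry π)) (hπ_u : ∀ t, ContDiff ℝ 1 (π t))
    (hπ_du : Continuous (Function.uncurry fun t u => deriv (π t) u)) :
    ∫ t in (0 : ℝ)..T, ∫ u in (-1 : ℝ)..1, deriv (convJ j (π t)) u ^ 2 ≤
      dirichletEnergy T π :=
  intervalIntegral.integral_mono_on hT
    (intervalIntegrable_intervalIntegral_of_continuous
      (F := fun t u => deriv (convJ j (π t)) u ^ 2)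
      ((continuous_uncurry_deriv_convJ hj hπ).fun_pow 2) _ _ _ _)
    (intervalIntegrable_intervalIntegral_of_continuous
      (F := fun t u => deriv (π t) u ^ 2) (hπ_du.fun_pow 2) _ _ _ _)
    fun t _ => integral_sq_deriv_convJ_le hj heven hsupp hmass (hπ_u t)

theorem mul_interactionTerm_sub_mobilityEnergy_le (hj : ContDiff ℝ 1 j) (heven : j.Even)
    (hsupp : ∀ x, 1 < |x| → j x = 0) (hmass : ∫ x, |j x| ≤ 1) (hT : 0 ≤ T)
    (hπ : Continuous (Function.uncurry π)) (hπ_u : ∀ t, ContDiff ℝ 1 (π t))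
    (hπ_du : Continuous (Function.uncurry fun t u => deriv (π t) u))
    (hπ_range : ∀ t ∈ Icc 0 T, ∀ u ∈ Icc (-1 : ℝ) 1, π t u ∈ Icc (0 : ℝ) 1)
    (hG : Continuous (Function.uncurry fun t u => deriv (G t) u)) (c : ℝ) :
    c * interactionTerm j T π G - mobilityEnergy T π G ≤ c ^ 2 / 8 * dirichletEnergy T π := by
  have hσ : Continuous (Function.uncurry fun t u => sigmaMob (π t u)) := by
    have : Continuous fun p : ℝ × ℝ => π p.1 p.2 := hπ
    unfold sigmaMob Function.uncurry
    fun_prop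
  have hD := continuous_uncurry_deriv_convJ hj hπ
  have hcross : Continuous (Function.uncurry fun t u =>
      c * (sigmaMob (π t u) * (deriv (G t) u * deriv (convJ j (π t)) u))) :=
    (hσ.mul (hG.mul hD)).const_mul c
  have hquad : Continuous (Function.uncurry fun t u => sigmaMob (π t u) * deriv (G t) u ^ 2) :=
    hσ.mul (hG.pow 2)
  calc c * interactionTerm j T π G - mobilityEnergy T π G
      = ∫ t in (0 : ℝ)..T, ∫ u in (-1 : ℝ)..1,
          (c * (sigmaMob (π t u) * (deriv (G t) u * deriv (convJ j (π t)) u))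
            - sigmaMob (π t u) * deriv (G t) u ^ 2) := by
        rw [integral_integral_sub_of_continuous hcross hquad]
        simp only [intervalIntegral.integral_const_mul, interactionTerm, mobilityEnergy]
    _ ≤ ∫ t in (0 : ℝ)..T, ∫ u in (-1 : ℝ)..1, c ^ 2 / 8 * deriv (convJ j (π t)) u ^ 2 :=
        integral_integral_mono_on_of_continuous hT (by norm_num) (hcross.fun_sub hquad)
          ((hD.pow 2).const_mul _) fun t ht u hu =>
            mul_mul_sub_mul_sq_le (sigmaMob_mem_Icc (hπ_range t ht u hu)) _ _ _
    _ = c ^ 2 / 8 * ∫ t in (0 : ℝ)..T, ∫ u in (-1 : ℝ)..1, deriv (convJ j (π t)) u ^ 2 := by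
        simp only [intervalIntegral.integral_const_mul]
    _ ≤ c ^ 2 / 8 * dirichletEnergy T π := by
        gcongr
        exact integral_integral_sq_deriv_convJ_le hj heven hsupp hmass hT hπ hπ_u hπ_du

theorem Ihat_le_two_mul_Ihat_add (hj : ContDiff ℝ 1 j) (heven : j.Even)
    (hsupp : ∀ x, 1 < |x| → j x = 0) (hmass : ∫ x, |j x| ≤ 1) (hT : 0 ≤ T)
    (hπ : Continuous (Function.uncurry π)) (hπ_u : ∀ t, ContDiff ℝ 1 (π t))
    (hπ_du : Continuous (Function.uncurry fun t u => deriv (π t) u))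
    (hπ_range : ∀ t ∈ Icc 0 T, ∀ u ∈ Icc (-1 : ℝ) 1, π t u ∈ Icc (0 : ℝ) 1)
    (β β' ρm ρp : ℝ) :
    Ihat j β ρm ρp T π ≤ 2 * Ihat j β' ρm ρp T π +
      ENNReal.ofReal ((β - β') ^ 2 / 8 * dirichletEnergy T π) := by
  refine iSup₂_le fun G hG => ?_
  have real_bound : JG j β ρm ρp T π G ≤ 2 * JG j β' ρm ρp T π (fun t u => 1 / 2 * G t u)
      + (β - β') ^ 2 / 8 * dirichletEnergy T π := by
    have hbound := mul_interactionTerm_sub_mobilityEnergy_le hj heven hsupp hmass hT hπ hπ_u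
      hπ_du hπ_range hG.2.2.2.2.1 (2 * (β' - β))
    rw [JG_eq_two_mul_JG_half_add j β β']
    linarith
  calc ENNReal.ofReal (JG j β ρm ρp T π G)
      ≤ ENNReal.ofReal (2 * JG j β' ρm ρp T π (fun t u => 1 / 2 * G t u)) +
          ENNReal.ofReal ((β - β') ^ 2 / 8 * dirichletEnergy T π) :=
        (ENNReal.ofReal_le_ofReal real_bound).trans ENNReal.ofReal_add_le
    _ = 2 * ENNReal.ofReal (JG j β' ρm ρp T π (fun t u => 1 / 2 * G t u)) +
          ENNReal.ofReal ((β - β') ^ 2 / 8 * dirichletEnergy T π) := by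
        rw [ENNReal.ofReal_mul zero_le_two, ENNReal.ofReal_ofNat]
    _ ≤ 2 * Ihat j β' ρm ρp T π +
          ENNReal.ofReal ((β - β') ^ 2 / 8 * dirichletEnergy T π) := by
        gcongr
        exact le_iSup₂_of_le _ (hG.const_mul (1 / 2)) le_rfl

theorem half_mul_sub_ofReal_le_of_le_two_mul_add {x y : ℝ≥0∞} {r : ℝ}
    (h : x ≤ 2 * y + ENNReal.ofReal (2 * r)) :
    1 / 2 * x - ENNReal.ofReal r ≤ y := by
  rw [ENNReal.ofReal_mul zero_le_two, ENNReal.ofReal_ofNat, ← mul_add] at h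
  rw [tsub_le_iff_right, one_div]
  exact (ENNReal.inv_mul_le_iff two_ne_zero ENNReal.ofNat_ne_top).2 h

theorem rate_functional_comparison_general (hj : ContDiff ℝ 1 j) (heven : j.Even)
    (hsupp : ∀ x, 1 < |x| → j x = 0) (hmass : ∫ x, |j x| ≤ 1) (hT : 0 ≤ T)
    (hπ : Continuous (Function.uncurry π)) (hπ_u : ∀ t, ContDiff ℝ 1 (π t))
    (hπ_du : Continuous (Function.uncurry fun t u => deriv (π t) u))
    (hπ_range : ∀ t ∈ Icc 0 T, ∀ u ∈ Icc (-1 : ℝ) 1, π t u ∈ Icc (0 : ℝ) 1)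
    (β β' ρm ρp : ℝ) :
    1 / 2 * Ihat j β' ρm ρp T π - ENNReal.ofReal ((β - β') ^ 2 / 16 * dirichletEnergy T π) ≤
        Ihat j β ρm ρp T π ∧
      Ihat j β ρm ρp T π ≤ 2 * Ihat j β' ρm ρp T π +
        ENNReal.ofReal ((β - β') ^ 2 / 8 * dirichletEnergy T π) := by
  have upper (β β' : ℝ) := Ihat_le_two_mul_Ihat_add hj heven hsupp hmass hT hπ hπ_u hπ_du
    hπ_range β β' ρm ρp
  refine ⟨half_mul_sub_ofReal_le_of_le_two_mul_add ?_, upper β β'⟩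
  convert upper β' β using 3
  ring

end RateFunctional

/-- comparison of the rate functionals with and without interaction:
`(1/2) Î⁰(π) - (β²/16) ∫∫ (∂_u π)² ≤ Î^β(π) ≤ 2 Î⁰(π) + (β²/8) ∫∫ (∂_u π)²`. -/
theorem rate_functional_comparison
    (j : ℝ → ℝ)
    (hj_smooth : ContDiff ℝ 1 j)
    (hj_nonneg : ∀ u, 0 ≤ j u)
    (hj_even : ∀ u, j (-u) = j u)
    (hj_supp : ∀ u : ℝ, 1 < |u| → j u = 0)
    (hj_int : (∫ u : ℝ, j u) = 1)
    (ρm ρp : ℝ) (hρm : ρm ∈ Ioo (0:ℝ) 1) (hρp : ρp ∈ Ioo (0:ℝ) 1)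
    (T : ℝ) (hT : 0 < T) (β : ℝ) (hβ : 0 ≤ β)
    (π : ℝ → ℝ → ℝ)
    (hπ_cont : Continuous (Function.uncurry π))
    (hπ_u : ∀ t : ℝ, ContDiff ℝ 1 (fun u => π t u))
    (hπ_du : Continuous (Function.uncurry fun t u => deriv (fun w => π t w) u))
    (hπ_range : ∀ t ∈ Icc (0:ℝ) T, ∀ u ∈ Icc (-1:ℝ) 1, π t u ∈ Icc (0:ℝ) 1) :
    (1/2 : ℝ≥0∞) * Ihat j 0 ρm ρp T π -
        ENNReal.ofReal
          (β^2/16 * ∫ t in (0:ℝ)..T, ∫ u in (-1:ℝ)..1, (deriv (fun w => π t w) u)^2) ≤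
      Ihat j β ρm ρp T π ∧
    Ihat j β ρm ρp T π ≤
      2 * Ihat j 0 ρm ρp T π +
        ENNReal.ofReal
          (β^2/8 * ∫ t in (0:ℝ)..T, ∫ u in (-1:ℝ)..1, (deriv (fun w => π t w) u)^2) := by
  have hj_mass : ∫ x, |j x| ≤ 1 := by
    simp only [abs_of_nonneg (hj_nonneg _), hj_int, le_refl]
  simpa only [sub_zero, dirichletEnergy] using rate_functional_comparison_general hj_smooth
    hj_even hj_supp hj_mass hT.le hπ_cont hπ_u hπ_du hπ_range β 0 ρm ρp

end
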